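/- arXiv:2511.02422 — 2 statements merged into one kernel-verified Lean document; each statement's English description precedes it below -/
import Mathlib

section
/- Let m₀ be a positive integer and let p₁, …, p_{m₀} be independent random variables on a probability space, each uniformly distributed on [0,1]. Let p_{(1)} ≤ … ≤ p_{(m₀)} denote their order statistics. Then for every α ∈ [0,1], ℙ(∃ k ∈ {1,…,m₀} : p_{(k)} ≤ α k / m₀) = α. -/
open MeasureTheory

/-- The `k`-th smallest value (1-based) among `(p i)_{i ∈ A}`. -/
noncomputable def orderStat {m : ℕ} (p : Fin m → ℝ) (A : Finset (Fin m)) (k : ℕ) : ℝ :=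
  ((A.val.map p).sort (· ≤ ·)).getD (k - 1) 0

lemma sorted_getD_le_iff (t : ℝ) : ∀ (l : List ℝ), l.Pairwise (· ≤ ·) → ∀ j, j < l.length →
    (l.getD j 0 ≤ t ↔ j < l.countP (fun x => decide (x ≤ t))) := by
  intro l
  induction l with
  | nil => intro _ j hj; simp at hj
  | cons a l ih =>
    intro hs j hj
    rw [List.pairwise_cons] at hs
    by_cases hat : a ≤ t
    · rw [List.countP_cons_of_pos (by simpa using hat)]
      cases j with
      | zero => simp [hat]
      | succ j =>
        have := ih hs.2 j (by simpa using hj)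
        simp only [List.getD_cons_succ]
        rw [this]; omega
    · have h0 : (a :: l).countP (fun x => decide (x ≤ t)) = 0 := by
        rw [List.countP_eq_zero]
        intro b hb
        rcases List.mem_cons.1 hb with rfl | hb
        · simpa using hat
        · have := hs.1 b hb
          simp only [decide_eq_true_eq]; intro h; exact hat (this.trans h)
      rw [h0]
      simp only [not_lt_zero, iff_false]
      cases j with
      | zero => simpa using hat
      | succ j =>
        have hj' : j < l.length := by simpa using hj
        simp only [List.getD_cons_succ]
        rw [List.getD_eq_getElem _ _ hj']
        have := hs.1 _ (List.getElem_mem hj')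
        intro h; exact hat (this.trans h)

/-- number of coordinates at most `α k / m` -/
noncomputable def simesC {m : ℕ} (α : ℝ) (x : Fin m → ℝ) (k : ℕ) : ℕ :=
  ∑ i, if x i ≤ α * k / m then 1 else 0

/-- number of rejections of the step-up procedure -/
noncomputable def simesR {m : ℕ} (α : ℝ) (x : Fin m → ℝ) : ℕ :=
  (Finset.range (m + 1)).sup (fun k => if k ≤ simesC α x k then k else 0)

lemma orderStat_le_iff {m : ℕ} (α : ℝ) (x : Fin m → ℝ) (k : ℕ) (h1 : 1 ≤ k) (hk : k ≤ m) :
    orderStat x Finset.univ k ≤ α * k / m ↔ k ≤ simesC α x k := by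
  unfold orderStat
  rw [sorted_getD_le_iff _ _ (Multiset.pairwise_sort _ _) _ (by simp; omega)]
  have : List.countP (fun y => decide (y ≤ α * k / m))
      (((Finset.univ : Finset (Fin m)).val.map x).sort (· ≤ ·)) = simesC α x k := by
    rw [← Multiset.coe_countP, Multiset.sort_eq, Multiset.countP_map]
    unfold simesC
    rw [← Finset.card_filter]
    rfl
  rw [this]; omega

lemma simesC_le {m : ℕ} (α : ℝ) (x : Fin m → ℝ) (k : ℕ) : simesC α x k ≤ m := by
  unfold simesC
  rw [← Finset.card_filter]
  exact (Finset.card_filter_le _ _).trans (by simp)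

lemma simes_thr_mono {m : ℕ} {α : ℝ} (hα : 0 ≤ α) {j k : ℕ} (h : j ≤ k) :
    α * j / m ≤ α * k / m := by
  have : (j : ℝ) ≤ k := by exact_mod_cast h
  gcongr

lemma simesC_mono {m : ℕ} {α : ℝ} (hα : 0 ≤ α) (x : Fin m → ℝ) {j k : ℕ} (h : j ≤ k) :
    simesC α x j ≤ simesC α x k := by
  unfold simesC
  apply Finset.sum_le_sum
  intro i _
  have := simes_thr_mono (m := m) hα h
  split_ifs with h1 h2
  · rfl
  · exact absurd (h1.trans this) h2
  · simp
  · rfl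

lemma le_simesR {m : ℕ} {α : ℝ} (x : Fin m → ℝ) {k : ℕ} (h : k ≤ simesC α x k) :
    k ≤ simesR α x := by
  have hk : k ∈ Finset.range (m + 1) := by
    have := simesC_le α x k
    simp; omega
  have := Finset.le_sup (f := fun k => if k ≤ simesC α x k then k else 0) hk
  simp only [h, if_true] at this
  exact this

lemma simesR_le_m {m : ℕ} {α : ℝ} (x : Fin m → ℝ) : simesR α x ≤ m := by
  apply Finset.sup_le
  intro k hk
  have := Finset.mem_range.1 hk
  split_ifs <;> omega

lemma simesR_le {m : ℕ} {α : ℝ} (x : Fin m → ℝ) : simesR α x ≤ simesC α x (simesR α x) := by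
  obtain ⟨k, hk, h⟩ := Finset.exists_mem_eq_sup (Finset.range (m + 1)) ⟨0, by simp⟩
    (fun k => if k ≤ simesC α x k then k else 0)
  have h' : simesR α x = if k ≤ simesC α x k then k else 0 := h
  split_ifs at h' with hc
  · rw [h']; exact hc
  · rw [h']; exact Nat.zero_le _

lemma simesC_R {m : ℕ} {α : ℝ} (hα : 0 ≤ α) (x : Fin m → ℝ) :
    simesC α x (simesR α x) = simesR α x :=
  le_antisymm (le_simesR x (simesC_mono hα x (simesR_le x))) (simesR_le x)

lemma simesC_update_le {m : ℕ} {α : ℝ} (hα : 0 ≤ α) (x : Fin m → ℝ) (i : Fin m) (k : ℕ) :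
    simesC α x k ≤ simesC α (Function.update x i 0) k := by
  unfold simesC
  apply Finset.sum_le_sum
  intro j _
  have : (0 : ℝ) ≤ α * k / m := by positivity
  by_cases hj : j = i
  · subst hj; simp only [Function.update_self, this, if_true]; split_ifs <;> simp
  · simp [Function.update_of_ne hj]

lemma simesC_update_eq {m : ℕ} {α : ℝ} (hα : 0 ≤ α) (x : Fin m → ℝ) (i : Fin m) (k : ℕ)
    (h : x i ≤ α * k / m) :
    simesC α (Function.update x i 0) k = simesC α x k := by
  unfold simesC
  apply Finset.sum_congr rfl
  intro j _
  have : (0 : ℝ) ≤ α * k / m := by positivity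
  by_cases hj : j = i
  · subst hj; simp [this, h]
  · simp [Function.update_of_ne hj]

lemma simesR_update_iff {m : ℕ} {α : ℝ} (hα : 0 ≤ α) (x : Fin m → ℝ) (i : Fin m) (k : ℕ)
    (h : x i ≤ α * k / m) :
    simesR α (Function.update x i 0) = k ↔ simesR α x = k := by
  have hle : simesR α x ≤ simesR α (Function.update x i 0) :=
    le_simesR _ ((simesR_le x).trans (simesC_update_le hα x i _))
  have key : k ≤ simesR α (Function.update x i 0) →
      simesR α (Function.update x i 0) ≤ simesR α x := by
    intro hk
    apply le_simesR
    rw [← simesC_update_eq hα x i _ (h.trans (simes_thr_mono hα hk))]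
    exact simesR_le _
  constructor
  · intro hk; have := key hk.ge; omega
  · intro hk; have := key (hk ▸ hle); omega

lemma simesR_update_pos {m : ℕ} {α : ℝ} (hα : 0 ≤ α) (x : Fin m → ℝ) (i : Fin m) :
    1 ≤ simesR α (Function.update x i 0) := by
  apply le_simesR
  unfold simesC
  rw [← Finset.card_filter, Nat.one_le_iff_ne_zero, Finset.card_ne_zero]
  refine ⟨i, ?_⟩
  simp only [Finset.mem_filter, Finset.mem_univ, true_and, Function.update_self]
  positivity

lemma measurable_simesR {m : ℕ} (α : ℝ) : Measurable (simesR (m := m) α) := by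
  have e : simesR (m := m) α = fun x => (Finset.range (m + 1)).sup' Finset.nonempty_range_add_one
      (fun k => if k ≤ simesC α x k then k else 0) := by
    funext x
    exact (Finset.sup'_eq_sup _ _).symm
  rw [e]
  apply Finset.measurable_range_sup'' (f := fun k (x : Fin m → ℝ) =>
    if k ≤ simesC α x k then k else 0)
  intro k _
  have hC : Measurable (fun x : Fin m → ℝ => simesC α x k) := by
    unfold simesC
    apply Finset.measurable_sum
    intro i _
    exact Measurable.ite (measurableSet_le (measurable_pi_apply i) measurable_const)
      measurable_const measurable_const
  exact Measurable.ite (measurableSet_le measurable_const hC) measurable_const measurable_const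

lemma simes_indep {Ω : Type*} [MeasurableSpace Ω] (μ : Measure Ω) [IsProbabilityMeasure μ]
    (m : ℕ) (p : Fin m → Ω → ℝ)
    (hmeas : ∀ i, Measurable (p i))
    (hindep : ProbabilityTheory.iIndepFun p μ) (α : ℝ) (i : Fin m) :
    ProbabilityTheory.IndepFun (p i)
      (fun ω => simesR α (Function.update (fun j => p j ω) i 0)) μ := by
  have h := hindep.indepFun_finset {i} (Finset.univ.erase i) (by simp) hmeas
  let φ : (({i} : Finset (Fin m)) → ℝ) → ℝ := fun f => f ⟨i, by simp⟩
  let ψ : ({j // j ∈ Finset.univ.erase i} → ℝ) → (Fin m → ℝ) :=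
    fun f j => if hj : j ∈ Finset.univ.erase i then f ⟨j, hj⟩ else 0
  have hφ : Measurable φ := measurable_pi_apply _
  have hψ : Measurable ψ := by
    apply measurable_pi_lambda
    intro j
    by_cases hj : j ∈ Finset.univ.erase i
    · simp only [ψ, hj, dif_pos]; exact measurable_pi_apply _
    · simp only [ψ, hj, dif_neg, not_false_eq_true]; exact measurable_const
  have h2 := h.comp hφ ((measurable_simesR α).comp hψ)
  have e : (fun ω => simesR α (Function.update (fun j => p j ω) i 0))
      = (simesR α ∘ ψ) ∘ fun ω (j : {j // j ∈ Finset.univ.erase i}) => p j ω := by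
    funext ω
    simp only [Function.comp]
    have : Function.update (fun j => p j ω) i 0
        = ψ (fun (j : {j // j ∈ Finset.univ.erase i}) => p j ω) := by
      funext j
      by_cases hj : j = i
      · subst hj; simp [ψ]
      · simp [ψ, hj]
    rw [this]
  rw [e]
  exact h2

/-- Exactness of the Simes (1986) inequality: for `m₀` independent
`Uniform[0,1]` p-values, the Simes event
`{∃ k : p₍ₖ₎ ≤ α k / m₀}` has probability exactly `α`. -/
theorem simes_exactness
    {Ω : Type*} [MeasurableSpace Ω] (μ : Measure Ω) [IsProbabilityMeasure μ]
    (m₀ : ℕ) (hm₀ : 0 < m₀) (p : Fin m₀ → Ω → ℝ)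
    (hmeas : ∀ i, Measurable (p i))
    (hindep : ProbabilityTheory.iIndepFun p μ)
    (hunif : ∀ i, Measure.map (p i) μ = volume.restrict (Set.Icc (0 : ℝ) 1))
    (α : ℝ) (hα : α ∈ Set.Icc (0 : ℝ) 1) :
    μ {ω | ∃ k ∈ Finset.Icc 1 m₀,
        orderStat (fun i => p i ω) Finset.univ k ≤ α * k / m₀}
      = ENNReal.ofReal α := by
  have hα0 := hα.1
  have hα1 := hα.2
  have hm : (0 : ℝ) < m₀ := by exact_mod_cast hm₀
  set X : Ω → Fin m₀ → ℝ := fun ω i => p i ω with hX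
  have hXm : Measurable X := measurable_pi_lambda _ hmeas
  have hRm : Measurable (fun ω => simesR α (X ω)) := (measurable_simesR α).comp hXm
  have hset : {ω | ∃ k ∈ Finset.Icc 1 m₀, orderStat (fun i => p i ω) Finset.univ k ≤ α * k / m₀}
      = ⋃ k ∈ Finset.Icc 1 m₀, {ω | simesR α (X ω) = k} := by
    ext ω
    simp only [Set.mem_ofPred_eq, Set.mem_iUnion, exists_prop, Finset.mem_Icc]
    constructor
    · rintro ⟨k, ⟨h1, h2⟩, h⟩
      have := le_simesR _ ((orderStat_le_iff α _ k h1 h2).1 h)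
      exact ⟨_, ⟨h1.trans this, simesR_le_m _⟩, rfl⟩
    · rintro ⟨k, ⟨h1, h2⟩, h⟩
      refine ⟨k, ⟨h1, h2⟩, (orderStat_le_iff α _ k h1 h2).2 ?_⟩
      have := simesR_le (α := α) (X ω)
      rwa [h] at this
  have hdisj : ∀ Y : Ω → ℕ, Measurable Y → 
      μ.real (⋃ k ∈ Finset.Icc 1 m₀, {ω | Y ω = k}) = 
        ∑ k ∈ Finset.Icc 1 m₀, μ.real {ω | Y ω = k} := by
    intro Y hY
    apply measureReal_biUnion_finset
    · intro a _ b _ hab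
      refine Set.disjoint_left.2 ?_
      intro ω h1 h2
      exact hab (h1.symm.trans h2)
    · intro k _
      exact hY (measurableSet_singleton k)
    · intro b _; exact measure_ne_top _ _
  let Y : Fin m₀ → Ω → ℕ := fun i ω => simesR α (Function.update (X ω) i 0)
  have hYm : ∀ i, Measurable (Y i) := by
    intro i
    refine (measurable_simesR α).comp ?_
    apply measurable_pi_lambda
    intro j
    by_cases hj : j = i
    · subst hj; simp
    · simpa [Function.update_of_ne hj] using hmeas j
  have hY1 : ∀ i, ∑ k ∈ Finset.Icc 1 m₀, μ.real {ω | Y i ω = k} = 1 := by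
    intro i
    rw [← hdisj _ (hYm i)]
    convert probReal_univ (μ := μ)
    apply Set.eq_univ_of_forall
    intro ω
    simp only [Set.mem_iUnion, Set.mem_ofPred_eq, exists_prop, Finset.mem_Icc]
    exact ⟨_, ⟨simesR_update_pos hα0 _ _, simesR_le_m _⟩, rfl⟩
  have hu : ∀ i, ∀ k ∈ Finset.Icc 1 m₀, μ.real {ω | p i ω ≤ α * k / m₀} = α * k / m₀ := by
    intro i k hk
    have h0 : (0 : ℝ) ≤ α * k / m₀ := by positivity
    have h1 : α * k / m₀ ≤ 1 := by
      have : (k : ℝ) ≤ m₀ := by exact_mod_cast (Finset.mem_Icc.1 hk).2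
      rw [div_le_one hm]
      nlinarith
    have : μ {ω | p i ω ≤ α * k / m₀} = Measure.map (p i) μ (Set.Iic (α * k / m₀)) := by
      rw [Measure.map_apply (hmeas i) measurableSet_Iic]; rfl
    rw [measureReal_def, this, hunif, Measure.restrict_apply measurableSet_Iic]
    have : Set.Iic (α * k / m₀) ∩ Set.Icc (0 : ℝ) 1 = Set.Icc 0 (α * k / m₀) := by
      ext y; simp only [Set.mem_inter_iff, Set.mem_Iic, Set.mem_Icc]
      constructor
      · rintro ⟨a, b, c⟩; exact ⟨b, a⟩
      · rintro ⟨a, b⟩; exact ⟨b, a, b.trans h1⟩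
    rw [this, Real.volume_Icc, sub_zero, ENNReal.toReal_ofReal h0]
  have hprod : ∀ i, ∀ k ∈ Finset.Icc 1 m₀,
      μ.real ({ω | p i ω ≤ α * k / m₀} ∩ {ω | simesR α (X ω) = k})
        = α * k / m₀ * μ.real {ω | Y i ω = k} := by
    intro i k hk
    have heq : {ω | p i ω ≤ α * k / m₀} ∩ {ω | simesR α (X ω) = k}
        = (p i) ⁻¹' (Set.Iic (α * k / m₀)) ∩ (Y i) ⁻¹' {k} := by
      ext ω
      simp only [Set.mem_inter_iff, Set.mem_ofPred_eq, Set.mem_preimage, Set.mem_Iic,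
        Set.mem_singleton_iff]
      exact and_congr_right fun h => (simesR_update_iff hα0 (X ω) i k h).symm
    rw [heq, measureReal_def, (simes_indep μ m₀ p hmeas hindep α i).measure_inter_preimage_eq_mul
      _ _ measurableSet_Iic (measurableSet_singleton k), ENNReal.toReal_mul]
    congr 1
    exact hu i k hk
  have hk : ∀ k ∈ Finset.Icc 1 m₀, (k : ℝ) * μ.real {ω | simesR α (X ω) = k}
      = ∑ i, μ.real ({ω | p i ω ≤ α * k / m₀} ∩ {ω | simesR α (X ω) = k}) := by
    intro k _
    have hmR : MeasurableSet {ω | simesR α (X ω) = k} := hRm (measurableSet_singleton k)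
    have hmP : ∀ i, MeasurableSet ({ω | p i ω ≤ α * k / m₀} ∩ {ω | simesR α (X ω) = k}) :=
      fun i => (measurableSet_le (hmeas i) measurable_const).inter hmR
    have e1 : ∀ i, μ.real ({ω | p i ω ≤ α * k / m₀} ∩ {ω | simesR α (X ω) = k})
        = ∫ ω, ({ω | p i ω ≤ α * k / m₀} ∩ {ω | simesR α (X ω) = k}).indicator 
          (fun _ => (1 : ℝ)) ω ∂μ := by
      intro i
      rw [integral_indicator_const _ (hmP i)]; simp
    simp_rw [e1]
    rw [← integral_finsetSum _ (fun i _ => (integrable_const (1 : ℝ)).indicator (hmP i))]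
    have e2 : (k : ℝ) * μ.real {ω | simesR α (X ω) = k}
        = ∫ ω, {ω | simesR α (X ω) = k}.indicator (fun _ => (k : ℝ)) ω ∂μ := by
      rw [integral_indicator_const _ hmR]; simp [mul_comm]
    rw [e2]
    congr 1
    funext ω
    by_cases h : simesR α (X ω) = k
    · have hc := simesC_R hα0 (X ω)
      rw [h] at hc
      unfold simesC at hc
      simp only [Set.indicator, Set.mem_inter_iff, Set.mem_ofPred_eq, h, and_true, if_true]
      exact_mod_cast hc.symm
    · simp [Set.indicator, h]
  rw [hset, ← ENNReal.ofReal_toReal (measure_ne_top μ _)]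
  congr 1
  rw [← measureReal_def, hdisj _ hRm]
  have : ∀ k ∈ Finset.Icc 1 m₀, μ.real {ω | simesR α (X ω) = k}
      = ∑ i, α / m₀ * μ.real {ω | Y i ω = k} := by
    intro k hk'
    have hk0 : (0 : ℝ) < k := by exact_mod_cast (Finset.mem_Icc.1 hk').1
    have h := hk k hk'
    rw [Finset.sum_congr rfl (fun i _ => hprod i k hk')] at h
    apply mul_left_cancel₀ hk0.ne'
    rw [h, Finset.mul_sum]
    apply Finset.sum_congr rfl
    intro i _
    ring
  rw [Finset.sum_congr rfl this, Finset.sum_comm]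
  simp_rw [← Finset.mul_sum, hY1]
  simp
  field_simp
end

section
/- Let m be a positive integer, α ∈ (0,1), and let p : Ω → (Fin m → ℝ) be a random vector of p-values on a probability space. Let H₀ ⊆ Fin m with |H₀| = m₀ ≥ 1 be such that the null p-values (p_i)_{i∈H₀} are independent and each uniformly distributed on [0,1]. Define the Hommel value h(α) = max{ i ∈ {0,1,…,m} : for all k ∈ {1,…,i}, p_{(m − i + k)} > α k / i }. Then ℙ(m₀ ≤ h(α)) ≥ 1 − α. -/
open MeasureTheory

open scoped Classical in
/-- The Hommel (1988) value: the largest `i ∈ {0,…,m}` such that the `i`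
largest p-values exceed the scaled Simes line `α k / i` for all `k ≤ i`. -/
noncomputable def hommelValue (m : ℕ) (α : ℝ) (p : Fin m → ℝ) : ℕ :=
  ((Finset.range (m + 1)).filter
    (fun i => ∀ k ∈ Finset.Icc 1 i, α * k / i < orderStat p Finset.univ (m - i + k))).sup id

open ProbabilityTheory in
theorem simes_aux {Ω ι : Type*} [MeasurableSpace Ω] (μ : Measure Ω) [IsProbabilityMeasure μ]
    [Fintype ι] [DecidableEq ι] (X : ι → Ω → ℝ) (hX : ∀ i, Measurable (X i))
    (hind : iIndepFun X μ) (t : ℕ → ℝ) (ht : Monotone t) (a : ENNReal)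
    (hu : ∀ i k, 1 ≤ k → k ≤ Fintype.card ι → μ {ω | X i ω ≤ t k} ≤ k * a) :
    μ {ω | ∃ k, 1 ≤ k ∧ k ≤ Fintype.card ι ∧ k ≤ ∑ j, if X j ω ≤ t k then 1 else 0}
      ≤ Fintype.card ι * a := by
  classical
  set n := Fintype.card ι with hn
  let C : ℕ → Ω → ℕ := fun k ω => ∑ j, if X j ω ≤ t k then 1 else 0
  let D : ℕ → Set Ω := fun k => {ω | k ≤ C k ω ∧ ∀ k' ∈ Finset.Ioc k n, C k' ω < k'}
  let F : (i : ι) → ℕ → Set (↥(Finset.univ.erase i : Finset ι) → ℝ) := fun i k =>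
    {v | k ≤ (∑ j, if v j ≤ t k then 1 else 0) + 1 ∧
      ∀ k' ∈ Finset.Ioc k n, (∑ j, if v j ≤ t k' then 1 else 0) + 1 < k'}
  let V : (i : ι) → Ω → (↥(Finset.univ.erase i : Finset ι) → ℝ) := fun i ω j => X j ω
  have hC : ∀ k, Measurable (C k) := fun k =>
    Finset.measurable_sum _ fun j _ =>
      Measurable.ite (measurableSet_le (hX j) measurable_const) measurable_const measurable_const
  have hD : ∀ k, MeasurableSet (D k) := by
    intro k
    have : D k = {ω | k ≤ C k ω} ∩ ⋂ k' ∈ Finset.Ioc k n, {ω | C k' ω < k'} := by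
      ext ω; simp [D]
    rw [this]
    exact (measurableSet_le measurable_const (hC k)).inter
      (Finset.measurableSet_biInter _ fun k' _ => measurableSet_lt (hC k') measurable_const)
  have hF : ∀ i k, MeasurableSet (F i k) := by
    intro i k
    have hm : ∀ k, Measurable (fun v : ↥(Finset.univ.erase i : Finset ι) → ℝ =>
        (∑ j, if v j ≤ t k then 1 else 0) + 1) := fun k => Measurable.add_const
      (Finset.measurable_sum _ fun j _ =>
        Measurable.ite (measurableSet_le (measurable_pi_apply j) measurable_const)
          measurable_const measurable_const) 1
    have : F i k = {v | k ≤ (∑ j, if v j ≤ t k then 1 else 0) + 1} ∩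
        ⋂ k' ∈ Finset.Ioc k n, {v | (∑ j, if v j ≤ t k' then 1 else 0) + 1 < k'} := by
      ext ω; simp [F]
    rw [this]
    exact (measurableSet_le measurable_const (hm k)).inter
      (Finset.measurableSet_biInter _ fun k' _ => measurableSet_lt (hm k') measurable_const)
  have hV : ∀ i, Measurable (V i) := fun i => measurable_pi_lambda _ fun j => hX j
  have hCV : ∀ i k ω, C k ω = (∑ j, if V i ω j ≤ t k then 1 else 0) +
      (if X i ω ≤ t k then 1 else 0) := by
    intro i k ω
    have := Finset.sum_coe_sort (Finset.univ.erase i) (fun j => if X j ω ≤ t k then 1 else 0)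
    simp only [C, V]
    rw [this, Finset.sum_erase_add _ _ (Finset.mem_univ i)]
  have hDF : ∀ i k, D k ∩ {ω | X i ω ≤ t k} ⊆ {ω | X i ω ≤ t k} ∩ V i ⁻¹' (F i k) := by
    rintro i k ω ⟨⟨h1, h2⟩, h3⟩
    have h3 : X i ω ≤ t k := h3
    refine ⟨h3, ?_, ?_⟩
    · rw [hCV i, if_pos h3] at h1; exact h1
    · intro k' hk'
      have := h2 k' hk'
      have h4 : X i ω ≤ t k' := le_trans h3 (ht (Finset.mem_Ioc.1 hk').1.le)
      rw [hCV i, if_pos h4] at this; exact this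
  have hprod : ∀ i k, μ ({ω | X i ω ≤ t k} ∩ V i ⁻¹' (F i k)) =
      μ {ω | X i ω ≤ t k} * μ (V i ⁻¹' (F i k)) := by
    intro i k
    have h := hind.indepFun_finset {i} (Finset.univ.erase i) (by simp) hX
    have hs : MeasurableSet {v : ↥({i} : Finset ι) → ℝ | v ⟨i, by simp⟩ ≤ t k} :=
      measurableSet_le (measurable_pi_apply _) measurable_const
    exact h.measure_inter_preimage_eq_mul _ _ hs (hF i k)
  have hkD : ∀ k ∈ Finset.Icc 1 n, μ (D k) ≤ ∑ i, a * μ (V i ⁻¹' (F i k)) := by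
    intro k hk
    obtain ⟨hk1, hk2⟩ := Finset.mem_Icc.1 hk
    have h1 : (k : ENNReal) * μ (D k) ≤ ∑ i, μ (D k ∩ {ω | X i ω ≤ t k}) := by
      calc (k : ENNReal) * μ (D k) = ∫⁻ ω in D k, (k : ENNReal) ∂μ := by simp
        _ ≤ ∫⁻ ω in D k, ∑ i, ({ω | X i ω ≤ t k}.indicator 1 ω) ∂μ := by
          refine setLIntegral_mono' (hD k) fun ω hω => ?_
          have := hω.1
          calc (k : ENNReal) ≤ (C k ω : ENNReal) := by exact_mod_cast this
            _ = _ := by simp [C, Set.indicator_apply]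
        _ = ∑ i, μ (D k ∩ {ω | X i ω ≤ t k}) := by
          have hms : ∀ i, MeasurableSet {ω | X i ω ≤ t k} := fun i =>
            measurableSet_le (hX i) measurable_const
          rw [lintegral_finsetSum _ fun i _ => measurable_one.indicator (hms i)]
          refine Finset.sum_congr rfl fun i _ => ?_
          rw [lintegral_indicator_one (hms i), Measure.restrict_apply (hms i), Set.inter_comm]
    have h2 : (k : ENNReal) * μ (D k) ≤ k * ∑ i, a * μ (V i ⁻¹' (F i k)) := by
      refine h1.trans ?_
      rw [Finset.mul_sum]
      refine Finset.sum_le_sum fun i _ => ?_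
      refine (measure_mono (hDF i k)).trans ?_
      rw [hprod, ← mul_assoc]
      gcongr
      exact hu i k hk1 hk2
    exact (ENNReal.mul_le_mul_iff_right (by simp; omega) (by simp)).1 h2
  have hsumF : ∀ i, ∑ k ∈ Finset.Icc 1 n, μ (V i ⁻¹' (F i k)) ≤ 1 := by
    intro i
    rw [← measure_biUnion_finset _ fun k _ => hV i (hF i k)]
    · exact prob_le_one
    · intro k hk l hl hkl
      simp only [Finset.coe_Icc, Set.mem_Icc] at hk hl
      refine Set.disjoint_left.2 fun ω h1 h2 => ?_
      rcases lt_or_gt_of_ne hkl with h | h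
      · exact absurd (h1.2 l (Finset.mem_Ioc.2 ⟨h, hl.2⟩)) (not_lt.2 h2.1)
      · exact absurd (h2.2 k (Finset.mem_Ioc.2 ⟨h, hk.2⟩)) (not_lt.2 h1.1)
  have hB : {ω | ∃ k, 1 ≤ k ∧ k ≤ n ∧ k ≤ ∑ j, if X j ω ≤ t k then 1 else 0} ⊆
      ⋃ k ∈ Finset.Icc 1 n, D k := by
    rintro ω ⟨k, hk1, hk2, hk3⟩
    let S := (Finset.Icc 1 n).filter fun k => k ≤ C k ω
    have hS : S.Nonempty := ⟨k, by simp only [S, Finset.mem_filter, Finset.mem_Icc]; exact ⟨⟨hk1, hk2⟩, hk3⟩⟩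
    have hmax := S.max'_mem hS
    set M := S.max' hS
    have hm := Finset.mem_filter.1 hmax
    refine Set.mem_iUnion₂.2 ⟨M, hm.1, hm.2, fun k' hk' => ?_⟩
    by_contra hcon
    obtain ⟨h1, h2⟩ := Finset.mem_Ioc.1 hk'
    have : k' ≤ M := S.le_max' k' (Finset.mem_filter.2
      ⟨Finset.mem_Icc.2 ⟨by omega, h2⟩, not_lt.1 hcon⟩)
    omega
  calc _ ≤ μ (⋃ k ∈ Finset.Icc 1 n, D k) := measure_mono hB
    _ ≤ ∑ k ∈ Finset.Icc 1 n, μ (D k) := measure_biUnion_finset_le _ _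
    _ ≤ ∑ k ∈ Finset.Icc 1 n, ∑ i, a * μ (V i ⁻¹' (F i k)) := Finset.sum_le_sum hkD
    _ = ∑ i, a * ∑ k ∈ Finset.Icc 1 n, μ (V i ⁻¹' (F i k)) := by
      rw [Finset.sum_comm]; simp_rw [Finset.mul_sum]
    _ ≤ ∑ i : ι, a * 1 := Finset.sum_le_sum fun i _ => by gcongr; exact hsumF i
    _ = n * a := by simp [hn]

theorem orderStat_count {m : ℕ} (p : Fin m → ℝ) (r : ℕ) (hr : r < m) (c : ℝ)
    (h : orderStat p Finset.univ (r + 1) ≤ c) :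
    r + 1 ≤ ∑ j, if p j ≤ c then 1 else 0 := by
  classical
  unfold orderStat at h
  set s := (Finset.univ : Finset (Fin m)).val.map p with hs
  have hlen : (s.sort (· ≤ ·)).length = m := by simp [hs]
  have hsort : (s.sort (· ≤ ·)).Pairwise (· ≤ ·) := Multiset.pairwise_sort s _
  set L := s.sort (· ≤ ·) with hL
  have hcount : L.countP (fun x => decide (x ≤ c)) = ∑ j, if p j ≤ c then 1 else 0 := by
    have h1 : Multiset.countP (fun x => x ≤ c) (L : Multiset ℝ) = s.countP (fun x => x ≤ c) := by
      rw [hL, Multiset.sort_eq]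
    rw [Multiset.coe_countP] at h1
    rw [h1, hs, Multiset.countP_map, Finset.sum_boole]
    rfl
  rw [← hcount]
  have hg : L[r]'(by omega) ≤ c := by
    rw [List.getD_eq_getElem _ _ (by omega)] at h
    simpa using h
  have hall : (L.take (r+1)).countP (fun x => decide (x ≤ c)) = (L.take (r+1)).length := by
    rw [List.countP_eq_length]
    intro x hx
    obtain ⟨i, hi, rfl⟩ := List.mem_iff_getElem.1 hx
    have hi' : i < r + 1 := by simp at hi; omega
    simp only [List.getElem_take, decide_eq_true_eq]
    refine le_trans ?_ hg
    rcases Nat.lt_or_ge i r with h' | h'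
    · exact List.pairwise_iff_getElem.1 hsort i r _ _ h'
    · have : i = r := by omega
      subst this; exact le_rfl
  have := (List.take_sublist (r+1) L).countP_le (p := fun x => decide (x ≤ c))
  rw [hall, List.length_take, hlen] at this
  omega

/-- Validity of the Hommel value as a `(1−α)`-confidence upper bound on the
number `m₀` of true nulls, when the null p-values are independent and
`Uniform[0,1]`: `ℙ(m₀ ≤ h(α)) ≥ 1 − α`. -/
theorem hommelValue_confidence_bound
    {Ω : Type*} [MeasurableSpace Ω] (μ : Measure Ω) [IsProbabilityMeasure μ]
    (m : ℕ) (hm : 0 < m) (α : ℝ) (hα : α ∈ Set.Ioo (0 : ℝ) 1)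
    (p : Ω → Fin m → ℝ)
    (H0 : Finset (Fin m)) (m₀ : ℕ) (hcard : H0.card = m₀) (hm₀ : 1 ≤ m₀)
    (hmeas : ∀ i, Measurable (fun ω => p ω i))
    (hindep : ProbabilityTheory.iIndepFun
      (fun (i : {i // i ∈ H0}) (ω : Ω) => p ω i) μ)
    (hunif : ∀ i ∈ H0, Measure.map (fun ω => p ω i) μ = volume.restrict (Set.Icc (0 : ℝ) 1)) :
    ENNReal.ofReal (1 - α) ≤ μ {ω | m₀ ≤ hommelValue m α (p ω)} := by
  classical
  obtain ⟨hα0, hα1⟩ := hα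
  have hn0 : (0 : ℝ) < m₀ := by exact_mod_cast hm₀
  have hle : m₀ ≤ m := by
    have := Finset.card_le_univ H0
    simpa [hcard] using this
  have hcF : Fintype.card {i // i ∈ H0} = m₀ := by simp [hcard]
  have hs := simes_aux μ (fun (i : {i // i ∈ H0}) (ω : Ω) => p ω i) (fun i => hmeas i) hindep
    (fun k => α * k / m₀)
    (fun x y hxy => by
      have : (x : ℝ) ≤ y := by exact_mod_cast hxy
      dsimp only
      gcongr)
    (ENNReal.ofReal (α / m₀))
    (by
      intro i k hk1 hk2
      rw [hcF] at hk2
      have h1 : μ {ω | p ω i ≤ α * k / m₀} =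
          Measure.map (fun ω => p ω i) μ (Set.Iic (α * k / m₀)) := by
        rw [Measure.map_apply (hmeas i) measurableSet_Iic]; rfl
      rw [h1, hunif i i.2, Measure.restrict_apply measurableSet_Iic]
      have h2 : Set.Iic (α * k / m₀) ∩ Set.Icc (0:ℝ) 1 ⊆ Set.Icc 0 (α * k / m₀) :=
        fun x hx => ⟨hx.2.1, hx.1⟩
      refine (measure_mono h2).trans ?_
      rw [Real.volume_Icc, ← ENNReal.ofReal_natCast, ← ENNReal.ofReal_mul (by positivity)]
      apply ENNReal.ofReal_le_ofReal
      apply le_of_eq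
      ring)
  rw [hcF] at hs
  set B := {ω | ∃ k, 1 ≤ k ∧ k ≤ m₀ ∧
    k ≤ ∑ j : {i // i ∈ H0}, if p ω j ≤ α * k / m₀ then 1 else 0} with hB
  have hBα : μ B ≤ ENNReal.ofReal α := by
    refine hs.trans ?_
    rw [← ENNReal.ofReal_natCast, ← ENNReal.ofReal_mul (by positivity)]
    apply ENNReal.ofReal_le_ofReal
    apply le_of_eq
    field_simp
  have hsub : Bᶜ ⊆ {ω | m₀ ≤ hommelValue m α (p ω)} := by
    intro ω hω
    have hω' : ¬ ∃ k, 1 ≤ k ∧ k ≤ m₀ ∧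
      k ≤ ∑ j : {i // i ∈ H0}, if p ω j ≤ α * k / m₀ then 1 else 0 := hω
    show m₀ ≤ hommelValue m α (p ω)
    unfold hommelValue
    refine Finset.le_sup (f := id) (b := m₀) ?_
    refine (@Finset.mem_filter _ _ (fun _ => Classical.propDecidable _) _ _).2 ?_
    refine ⟨Finset.mem_range.2 (by omega), fun k hk => ?_⟩
    obtain ⟨hk1, hk2⟩ := Finset.mem_Icc.1 hk
    by_contra hcon
    rw [not_lt] at hcon
    apply hω'
    refine ⟨k, hk1, hk2, ?_⟩
    have e : m - m₀ + k = (m - m₀ + k - 1) + 1 := by omega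
    rw [e] at hcon
    have hc := orderStat_count (p ω) (m - m₀ + k - 1) (by omega) _ hcon
    rw [← e] at hc
    rw [Finset.sum_coe_sort H0 (fun j => if p ω j ≤ α * k / m₀ then 1 else 0)]
    rw [← Finset.sum_add_sum_compl H0] at hc
    have h3 : ∑ j ∈ H0ᶜ, (if p ω j ≤ α * k / m₀ then 1 else 0) ≤ m - m₀ := by
      calc _ ≤ ∑ j ∈ H0ᶜ, 1 := Finset.sum_le_sum fun j _ => by split_ifs <;> simp
        _ = m - m₀ := by simp [Finset.card_compl, hcard]
    omega
  have hone : (1 : ENNReal) ≤ μ B + μ Bᶜ := by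
    rw [← measure_univ (μ := μ), ← Set.union_compl_self B]
    exact measure_union_le _ _
  calc ENNReal.ofReal (1 - α) = 1 - ENNReal.ofReal α := by
        rw [ENNReal.ofReal_sub _ hα0.le, ENNReal.ofReal_one]
    _ ≤ 1 - μ B := tsub_le_tsub_left hBα 1
    _ ≤ μ Bᶜ := tsub_le_iff_left.2 hone
    _ ≤ _ := measure_mono hsub
end
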